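/- arXiv:2106.05200 — 2 statements merged into one kernel-verified Lean document; each statement's English description precedes it below -/
import Mathlib

section
/- Let f: ℝⁿ → ℝⁿ be continuously differentiable such that at every point s the Jacobian J_f(s) is invertible and lower triangular, and let p be a probability density on ℝⁿ with c_IMA(f,·) p-integrable. Then C_IMA(f,p) = 0 if and only if J_f(s) is diagonal for p-almost every s; otherwise C_IMA(f,p) > 0. -/
open Matrix MeasureTheory

/-- Euclidean norm of the `i`-th column of `W`. -/
noncomputable def colNorm {n : ℕ} (W : Matrix (Fin n) (Fin n) ℝ) (i : Fin n) : ℝ :=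
  Real.sqrt (∑ j, (W j i) ^ 2)

/-- Local IMA contrast of a matrix. -/
noncomputable def cIMA {n : ℕ} (W : Matrix (Fin n) (Fin n) ℝ) : ℝ :=
  (∑ i, Real.log (colNorm W i)) - Real.log |W.det|

/-- Jacobian matrix of `f : ℝⁿ → ℝⁿ` at `s`; its `j`-th column is `∂f/∂s_j (s)`. -/
noncomputable def jacobian {n : ℕ} (f : (Fin n → ℝ) → (Fin n → ℝ)) (s : Fin n → ℝ) :
    Matrix (Fin n) (Fin n) ℝ :=
  Matrix.of fun i j => fderiv ℝ f s (Pi.single j 1) i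

/-- Global IMA contrast of `f` with respect to a probability density `p`. -/
noncomputable def CIMA {n : ℕ} (f : (Fin n → ℝ) → (Fin n → ℝ))
    (p : (Fin n → ℝ) → ℝ) : ℝ :=
  ∫ s, cIMA (jacobian f s) * p s

/-!
When the determinant of an invertible matrix is the product of its diagonal entries, as for a
triangular matrix, its local contrast splits over the columns into the terms
`log (colNorm W i) - log |W i i|`. A column is at least as long as its diagonal entry, with equality
exactly when the rest of the column vanishes; so the contrast is nonnegative, and it is zero only
for diagonal matrices. Integrating against a measure gives the global statement.
-/

section Matrix

variable {n : ℕ} {W : Matrix (Fin n) (Fin n) ℝ}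

theorem abs_apply_le_colNorm (W : Matrix (Fin n) (Fin n) ℝ) (i j : Fin n) :
    |W i j| ≤ colNorm W j :=
  Real.abs_le_sqrt <|
    Finset.single_le_sum (f := fun k => W k j ^ 2) (fun _ _ => sq_nonneg _) (Finset.mem_univ i)

theorem colNorm_eq_abs_apply_iff {i j : Fin n} :
    colNorm W j = |W i j| ↔ ∀ k, k ≠ i → W k j = 0 := by
  have hsq : ∀ k ∈ Finset.univ.erase i, 0 ≤ W k j ^ 2 := fun _ _ => sq_nonneg _
  calc colNorm W j = |W i j|
      ↔ ∑ k, W k j ^ 2 = W i j ^ 2 := by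
        rw [colNorm, ← Real.sqrt_sq_eq_abs,
          Real.sqrt_inj (Finset.sum_nonneg fun _ _ => sq_nonneg _) (sq_nonneg _)]
    _ ↔ ∑ k ∈ Finset.univ.erase i, W k j ^ 2 = 0 := by
        rw [← Finset.add_sum_erase _ _ (Finset.mem_univ i), add_eq_left]
    _ ↔ ∀ k, k ≠ i → W k j = 0 := by
        rw [Finset.sum_eq_zero_iff_of_nonneg hsq]
        simp only [Finset.mem_erase, Finset.mem_univ, and_true, sq_eq_zero_iff]

theorem log_abs_apply_le_log_colNorm {i j : Fin n} (hij : W i j ≠ 0) :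
    Real.log |W i j| ≤ Real.log (colNorm W j) :=
  Real.log_le_log (abs_pos.2 hij) (abs_apply_le_colNorm W i j)

theorem log_colNorm_eq_log_abs_apply_iff {i j : Fin n} (hij : W i j ≠ 0) :
    Real.log (colNorm W j) = Real.log |W i j| ↔ ∀ k, k ≠ i → W k j = 0 := by
  have hpos : 0 < |W i j| := abs_pos.2 hij
  rw [← colNorm_eq_abs_apply_iff]
  exact Real.log_injOn_pos.eq_iff (hpos.trans_le (abs_apply_le_colNorm W i j)) hpos

theorem diag_ne_zero_of_det_eq_prod_diag (hdet : W.det = ∏ i, W i i) (hW : W.det ≠ 0)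
    (i : Fin n) : W i i ≠ 0 :=
  Finset.prod_ne_zero_iff.1 (hdet.symm.trans_ne hW) i (Finset.mem_univ i)

theorem cIMA_eq_sum_of_det_eq_prod_diag (hdet : W.det = ∏ i, W i i) (hW : W.det ≠ 0) :
    cIMA W = ∑ i, (Real.log (colNorm W i) - Real.log |W i i|) := by
  have hdiag := diag_ne_zero_of_det_eq_prod_diag hdet hW
  rw [cIMA, hdet, Finset.abs_prod, Real.log_prod fun i _ => abs_ne_zero.2 (hdiag i),
    Finset.sum_sub_distrib]

theorem cIMA_nonneg_of_det_eq_prod_diag (hdet : W.det = ∏ i, W i i) (hW : W.det ≠ 0) :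
    0 ≤ cIMA W := by
  rw [cIMA_eq_sum_of_det_eq_prod_diag hdet hW]
  exact Finset.sum_nonneg fun i _ => sub_nonneg.2 <|
    log_abs_apply_le_log_colNorm (diag_ne_zero_of_det_eq_prod_diag hdet hW i)

theorem cIMA_eq_zero_iff_isDiag (hdet : W.det = ∏ i, W i i) (hW : W.det ≠ 0) :
    cIMA W = 0 ↔ W.IsDiag := by
  have hdiag := diag_ne_zero_of_det_eq_prod_diag hdet hW
  have hcol (i : Fin n) :
      Real.log (colNorm W i) - Real.log |W i i| = 0 ↔ ∀ k, k ≠ i → W k i = 0 :=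
    sub_eq_zero.trans (log_colNorm_eq_log_abs_apply_iff (hdiag i))
  rw [cIMA_eq_sum_of_det_eq_prod_diag hdet hW, Finset.sum_eq_zero_iff_of_nonneg fun i _ =>
    sub_nonneg.2 (log_abs_apply_le_log_colNorm (hdiag i))]
  simp only [Finset.mem_univ, true_imp_iff, hcol]
  exact forall_comm

end Matrix

section Integral

variable {α : Type*} [MeasurableSpace α] {μ : Measure α} {n : ℕ}
  {M : α → Matrix (Fin n) (Fin n) ℝ}

theorem integral_cIMA_nonneg (hdet : ∀ᵐ a ∂μ, (M a).det = ∏ i, M a i i)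
    (hM : ∀ᵐ a ∂μ, (M a).det ≠ 0) : 0 ≤ ∫ a, cIMA (M a) ∂μ :=
  integral_nonneg_of_ae <| (hdet.and hM).mono fun _ h => cIMA_nonneg_of_det_eq_prod_diag h.1 h.2

theorem integral_cIMA_eq_zero_iff (hdet : ∀ᵐ a ∂μ, (M a).det = ∏ i, M a i i)
    (hM : ∀ᵐ a ∂μ, (M a).det ≠ 0) (hint : Integrable (fun a => cIMA (M a)) μ) :
    ∫ a, cIMA (M a) ∂μ = 0 ↔ ∀ᵐ a ∂μ, (M a).IsDiag := by
  have hnonneg : 0 ≤ᵐ[μ] fun a => cIMA (M a) :=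
    (hdet.and hM).mono fun _ h => cIMA_nonneg_of_det_eq_prod_diag h.1 h.2
  rw [integral_eq_zero_iff_of_nonneg_ae hnonneg hint]
  exact Filter.eventually_congr <|
    (hdet.and hM).mono fun _ h => cIMA_eq_zero_iff_isDiag h.1 h.2

end Integral

section Density

theorem integrable_withDensity_ofReal_iff {α : Type*} [MeasurableSpace α] {μ : Measure α}
    {p g : α → ℝ} (hp : AEMeasurable p μ) (hp0 : 0 ≤ᵐ[μ] p) :
    Integrable g (μ.withDensity fun a => ENNReal.ofReal (p a)) ↔
      Integrable (fun a => g a * p a) μ := by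
  rw [integrable_withDensity_iff_integrable_smul₀' hp.ennreal_ofReal
    (ae_of_all _ fun _ => ENNReal.ofReal_lt_top)]
  refine integrable_congr (hp0.mono fun a ha => ?_)
  simp only [ENNReal.toReal_ofReal ha, smul_eq_mul, mul_comm]

variable {n : ℕ} {f : (Fin n → ℝ) → (Fin n → ℝ)} {p : (Fin n → ℝ) → ℝ}

theorem CIMA_eq_integral_withDensity (hp : AEMeasurable p) (hp0 : 0 ≤ᵐ[volume] p) :
    CIMA f p =
      ∫ s, cIMA (jacobian f s) ∂(volume.withDensity fun s => ENNReal.ofReal (p s)) := by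
  rw [CIMA, integral_withDensity_eq_integral_toReal_smul₀ hp.ennreal_ofReal
    (ae_of_all _ fun _ => ENNReal.ofReal_lt_top)]
  refine integral_congr_ae (hp0.mono fun s hs => ?_)
  simp only [ENNReal.toReal_ofReal hs, smul_eq_mul, mul_comm]

theorem globalIMA_triangularJacobian_general
    (hp : AEMeasurable p) (hp0 : 0 ≤ᵐ[volume] p)
    (hJinv : ∀ᵐ s ∂(volume.withDensity fun s => ENNReal.ofReal (p s)), (jacobian f s).det ≠ 0)
    (hJdet : ∀ᵐ s ∂(volume.withDensity fun s => ENNReal.ofReal (p s)),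
      (jacobian f s).det = ∏ i, jacobian f s i i)
    (hint : Integrable fun s => cIMA (jacobian f s) * p s) :
    (CIMA f p = 0 ↔
      ∀ᵐ s ∂(volume.withDensity fun s => ENNReal.ofReal (p s)), (jacobian f s).IsDiag) ∧
    ((¬ ∀ᵐ s ∂(volume.withDensity fun s => ENNReal.ofReal (p s)), (jacobian f s).IsDiag) →
      0 < CIMA f p) := by
  rw [CIMA_eq_integral_withDensity hp hp0]
  have hzero := integral_cIMA_eq_zero_iff hJdet hJinv <|
    (integrable_withDensity_ofReal_iff hp hp0).2 hint
  exact ⟨hzero, fun h => (integral_cIMA_nonneg hJdet hJinv).lt_of_ne' (mt hzero.1 h)⟩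

end Density

/-- for a map with everywhere invertible lower triangular Jacobian,
the global IMA contrast vanishes iff the Jacobian is diagonal `p`-almost
everywhere, and is strictly positive otherwise. -/
theorem globalIMA_triangularJacobian
    {n : ℕ} (f : (Fin n → ℝ) → (Fin n → ℝ))
    (hf : ContDiff ℝ 1 f)
    (hJinv : ∀ s, (jacobian f s).det ≠ 0)
    (hJtri : ∀ s, ∀ i j : Fin n, i < j → jacobian f s i j = 0)
    (p : (Fin n → ℝ) → ℝ) (hp0 : ∀ s, 0 ≤ p s) (hp1 : (∫ s, p s) = 1)
    (hint : Integrable fun s => cIMA (jacobian f s) * p s) :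
    (CIMA f p = 0 ↔
      ∀ᵐ s ∂(volume.withDensity fun s => ENNReal.ofReal (p s)),
        ∀ i j : Fin n, i ≠ j → jacobian f s i j = 0) ∧
    ((¬ ∀ᵐ s ∂(volume.withDensity fun s => ENNReal.ofReal (p s)),
        ∀ i j : Fin n, i ≠ j → jacobian f s i j = 0) → 0 < CIMA f p) := by
  exact globalIMA_triangularJacobian_general
    (integrable_of_integral_eq_one hp1).aemeasurable (ae_of_all _ hp0) (ae_of_all _ hJinv)
    (ae_of_all _ fun s => det_of_isLowerTriangular _ (hJtri s)) hint
end

section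
/- Let f: ℝⁿ → ℝⁿ be a smooth conformal map with Jacobian J_f(s) = λ(s) O(s), where λ is a strictly positive scalar field and O(s) is orthogonal for each s. Let σ(z) = (σ_1(z_1), …, σ_n(z_n)) be an element-wise smooth diffeomorphism of ℝⁿ with strictly positive derivatives, such that the derivative of σ_1⁻¹ is strictly monotonic on a neighborhood of some point z₁⁰ (equivalently, σ_1 is not affine). Let R ∈ ℝ^{n×n} be an orthogonal matrix whose first row has at least two nonvanishing entries (equivalently, Rᵀ does not map the first canonical basis vector e_1 to ± a canonical basis vector). Let p be a smooth strictly positive probability density on ℝⁿ. Then C_IMA(f ∘ σ⁻¹ ∘ R, p) > 0. -/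
open Matrix MeasureTheory

/-!
The contrast of `W` is half the logarithmic defect in Hadamard's inequality for the Gram matrix
`Wᵀ W`, so it is nonnegative and vanishes exactly when the columns of `W` are orthogonal. With
`Wᵀ W = U Λ Uᵀ`, Hadamard's inequality is Jensen's inequality for `log` and the doubly stochastic
weights `U i k ^ 2`; the strict concavity of `log` gives the equality case.

A conformal factor on the left does not change the contrast, so only the Jacobian `D R` of
`σ⁻¹ ∘ R` matters, where `D` is the diagonal matrix of the derivatives of `σ_k⁻¹` at `(R z)_k`. If
the contrast vanished everywhere, then `Rᵀ D² R` would be diagonal at every `z`, which forces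
`D m m ^ 2 = D k k ^ 2` for all `m`, `k` such that some column of `R` is nonzero in both rows `m`
and `k`. By orthogonality a row `m` with two nonzero entries shares a nonzero column with another
row `k`. Moving `(R z)_m` while `(R z)_k` stays fixed then shows that the derivative of `σ_m⁻¹` is
constant. Hence the contrast, which is continuous, is positive on a nonempty open set.
-/

section Schur

theorem sum_sum_smul_of_sum_col_eq_one {R β ι : Type*} [Semiring R] [AddCommMonoid β] [Module R β]
    [Fintype ι] {w : Matrix ι ι R} (hw : ∀ k, ∑ i, w i k = 1) (y : ι → β) :
    ∑ i, ∑ k, w i k • y k = ∑ k, y k := by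
  rw [Finset.sum_comm]
  simp only [← Finset.sum_smul, hw, one_smul]

variable {𝕜 E β ι : Type*} [Field 𝕜] [LinearOrder 𝕜] [IsStrictOrderedRing 𝕜]
  [AddCommGroup E] [Module 𝕜 E] [AddCommGroup β] [PartialOrder β] [IsOrderedAddMonoid β]
  [Module 𝕜 β] [IsStrictOrderedModule 𝕜 β] [Fintype ι] [DecidableEq ι]
  {s : Set E} {φ : E → β} {w : Matrix ι ι 𝕜} {x : ι → E}

theorem sum_map_le_sum_map_sum_smul (hφ : ConcaveOn 𝕜 s φ) (hw : w ∈ doublyStochastic 𝕜 ι)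
    (hx : ∀ k, x k ∈ s) : ∑ k, φ (x k) ≤ ∑ i, φ (∑ k, w i k • x k) := by
  rw [← sum_sum_smul_of_sum_col_eq_one (sum_col_of_mem_doublyStochastic hw)]
  exact Finset.sum_le_sum fun i _ => hφ.le_map_sum (fun k _ => nonneg_of_mem_doublyStochastic hw)
    (sum_row_of_mem_doublyStochastic hw i) fun k _ => hx k

theorem sum_map_eq_sum_map_sum_smul_iff (hφ : StrictConcaveOn 𝕜 s φ)
    (hw : w ∈ doublyStochastic 𝕜 ι) (hx : ∀ k, x k ∈ s) :
    ∑ k, φ (x k) = ∑ i, φ (∑ k, w i k • x k) ↔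
      ∀ i k, w i k ≠ 0 → x k = ∑ l, w i l • x l := by
  have jensen_le (i : ι) : ∑ k, w i k • φ (x k) ≤ φ (∑ k, w i k • x k) :=
    hφ.concaveOn.le_map_sum (fun k _ => nonneg_of_mem_doublyStochastic hw)
      (sum_row_of_mem_doublyStochastic hw i) fun k _ => hx k
  have jensen_eq_iff (i : ι) : ∑ k, w i k • φ (x k) = φ (∑ k, w i k • x k) ↔
      ∀ k, w i k ≠ 0 → x k = ∑ l, w i l • x l := by
    simpa [eq_comm (a := φ _)] using
      hφ.map_sum_eq_iff' (t := Finset.univ) (fun k _ => nonneg_of_mem_doublyStochastic hw)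
        (sum_row_of_mem_doublyStochastic hw i) fun k _ => hx k
  rw [← sum_sum_smul_of_sum_col_eq_one (sum_col_of_mem_doublyStochastic hw),
    Finset.sum_eq_sum_iff_of_le fun i _ => jensen_le i]
  simp only [Finset.mem_univ, true_imp_iff, jensen_eq_iff]

end Schur

section Orthogonal

variable {ι : Type*} [Fintype ι] [DecidableEq ι] {K : Type*} [CommRing K]
  {U : Matrix ι ι K}

theorem map_sq_mem_doublyStochastic [LinearOrder K] [IsStrictOrderedRing K]
    (hU : U ∈ orthogonalGroup ι K) :
    U.map (· ^ 2) ∈ doublyStochastic K ι := by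
  refine mem_doublyStochastic_iff_sum.2 ⟨fun i j => sq_nonneg _, fun i => ?_, fun j => ?_⟩
  · simpa [mul_apply, sq] using congrFun₂ ((mem_orthogonalGroup_iff ι K).1 hU) i i
  · simpa [mul_apply, sq] using congrFun₂ ((mem_orthogonalGroup_iff' ι K).1 hU) j j

variable [IsDomain K]

theorem det_diagonal_mul_ne_zero (hU : U ∈ orthogonalGroup ι K) {d : ι → K} (hd : ∀ k, d k ≠ 0) :
    (diagonal d * U).det ≠ 0 := by
  rw [det_mul, det_diagonal]
  exact mul_ne_zero (Finset.prod_ne_zero_iff.2 fun k _ => hd k)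
    (isUnit_det_of_right_inverse ((mem_orthogonalGroup_iff ι K).1 hU)).ne_zero

theorem exists_ne_apply_ne_zero_of_mem_orthogonalGroup (hU : U ∈ orthogonalGroup ι K)
    {m i j : ι} (hij : i ≠ j) (hi : U m i ≠ 0) (hj : U m j ≠ 0) : ∃ k ≠ m, U k i ≠ 0 := by
  by_contra! h
  have orth : ∑ k, U k i * U k j = 0 := by
    simpa [mul_apply, hij] using congrFun₂ ((mem_orthogonalGroup_iff' ι K).1 hU) i j
  rw [Fintype.sum_eq_single m fun k hk => by rw [h k hk, zero_mul]] at orth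
  exact mul_ne_zero hi hj orth

theorem sq_eq_sq_of_isDiag_gram_diagonal_mul (hU : U ∈ orthogonalGroup ι K) {d : ι → K}
    (h : ((diagonal d * U)ᵀ * (diagonal d * U)).IsDiag) {i k l : ι} (hk : U k i ≠ 0)
    (hl : U l i ≠ 0) : d k ^ 2 = d l ^ 2 := by
  obtain ⟨μ, hμ⟩ : ∃ μ, (diagonal d * U)ᵀ * (diagonal d * U) = diagonal μ :=
    ⟨_, h.diagonal_diag.symm⟩
  have intertwine : diagonal (d ^ 2) * U = U * diagonal μ := by
    have hUU : U * Uᵀ = 1 := (mem_orthogonalGroup_iff ι K).1 hU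
    rw [← hμ, transpose_mul, diagonal_transpose, ← Matrix.mul_assoc, ← Matrix.mul_assoc,
      ← Matrix.mul_assoc, hUU, Matrix.one_mul, diagonal_mul_diagonal, sq]
    rfl
  have sq_eq (a : ι) (ha : U a i ≠ 0) : d a ^ 2 = μ i := by
    have := congrFun₂ intertwine a i
    rw [diagonal_mul, mul_diagonal, mul_comm] at this
    exact mul_left_cancel₀ ha this
  rw [sq_eq k hk, sq_eq l hl]

end Orthogonal

section Hadamard

variable {ι : Type*} [Fintype ι] [DecidableEq ι] {A : Matrix ι ι ℝ}

theorem posDef_gram {W : Matrix ι ι ℝ} (hW : W.det ≠ 0) : (Wᵀ * W).PosDef :=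
  PosDef.conjTranspose_mul_self W
    (mulVec_injective_iff_isUnit.2 ((isUnit_iff_isUnit_det W).2 hW.isUnit))

theorem mul_eigenvectorUnitary_eq (hA : A.IsHermitian) :
    A * (hA.eigenvectorUnitary : Matrix ι ι ℝ) =
      hA.eigenvectorUnitary * diagonal hA.eigenvalues := by
  ext i k
  rw [mul_diagonal, mul_comm]
  simpa [mul_apply, mulVec, dotProduct] using congrFun (hA.mulVec_eigenvectorBasis k) i

theorem diag_eq_sum_sq_mul_eigenvalues (hA : A.IsHermitian) (i : ι) :
    A i i = ∑ k, (hA.eigenvectorUnitary : Matrix ι ι ℝ) i k ^ 2 * hA.eigenvalues k := by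
  set U : Matrix ι ι ℝ := ↑hA.eigenvectorUnitary with hU
  have hA_eq : A = U * diagonal hA.eigenvalues * Uᵀ := by
    have hUU : U * Uᵀ = 1 := (mem_orthogonalGroup_iff ι ℝ).1 hA.eigenvectorUnitary.2
    rw [← mul_eigenvectorUnitary_eq, ← hU, Matrix.mul_assoc, hUU, Matrix.mul_one]
  conv_lhs => rw [hA_eq, mul_apply]
  refine Finset.sum_congr rfl fun k _ => ?_
  rw [mul_diagonal, transpose_apply]
  ring

theorem log_det_eq_sum_log_eigenvalues (hA : A.PosDef) :
    Real.log A.det = ∑ k, Real.log (hA.isHermitian.eigenvalues k) := by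
  rw [hA.isHermitian.det_eq_prod_eigenvalues]
  exact Real.log_prod fun k _ => (hA.eigenvalues_pos k).ne'

theorem log_det_le_sum_log_diag (hA : A.PosDef) : Real.log A.det ≤ ∑ i, Real.log (A i i) := by
  simp only [log_det_eq_sum_log_eigenvalues hA, diag_eq_sum_sq_mul_eigenvalues hA.isHermitian]
  exact sum_map_le_sum_map_sum_smul strictConcaveOn_log_Ioi.concaveOn
    (map_sq_mem_doublyStochastic hA.isHermitian.eigenvectorUnitary.2) hA.eigenvalues_pos

theorem log_det_eq_sum_log_diag_iff (hA : A.PosDef) :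
    Real.log A.det = ∑ i, Real.log (A i i) ↔ A.IsDiag := by
  refine ⟨fun h => ?_, fun h => ?_⟩
  · set U : Matrix ι ι ℝ := ↑hA.isHermitian.eigenvectorUnitary with hU
    have hUU : U * Uᵀ = 1 := (mem_orthogonalGroup_iff ι ℝ).1 hA.isHermitian.eigenvectorUnitary.2
    have eigenvalue_eq (i k : ι) (hik : U i k ≠ 0) : hA.isHermitian.eigenvalues k = A i i := by
      rw [diag_eq_sum_sq_mul_eigenvalues hA.isHermitian]
      simp only [log_det_eq_sum_log_eigenvalues hA,
        diag_eq_sum_sq_mul_eigenvalues hA.isHermitian] at h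
      exact (sum_map_eq_sum_map_sum_smul_iff strictConcaveOn_log_Ioi
        (map_sq_mem_doublyStochastic hA.isHermitian.eigenvectorUnitary.2)
        hA.eigenvalues_pos).1 h i k (pow_ne_zero 2 hik)
    have mul_eq : A * U = diagonal A.diag * U := by
      ext i k
      rw [hU, mul_eigenvectorUnitary_eq, ← hU, mul_diagonal, diagonal_mul, diag_apply, mul_comm]
      by_cases hik : U i k = 0
      · rw [hik, mul_zero, mul_zero]
      · rw [eigenvalue_eq i k hik]
    have : A = diagonal A.diag := by
      simpa only [Matrix.mul_assoc, hUU, Matrix.mul_one] using congrArg (· * Uᵀ) mul_eq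
    rw [this]
    exact isDiag_diagonal _
  · conv_lhs => rw [← h.diagonal_diag, det_diagonal]
    exact Real.log_prod fun i _ => hA.diag_pos.ne'

end Hadamard

section Contrast

variable {n : ℕ} {W : Matrix (Fin n) (Fin n) ℝ}

theorem colNorm_eq_sqrt_gram (W : Matrix (Fin n) (Fin n) ℝ) (i : Fin n) :
    colNorm W i = √((Wᵀ * W) i i) := by
  simp only [colNorm, mul_apply, transpose_apply, sq]

theorem colNorm_pos (hW : W.det ≠ 0) (i : Fin n) : 0 < colNorm W i := by
  rw [colNorm_eq_sqrt_gram]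
  exact Real.sqrt_pos.2 (posDef_gram hW).diag_pos

/-- The contrast is half the logarithmic defect in Hadamard's inequality `det G ≤ ∏ i, G i i` for
the Gram matrix `G = Wᵀ W`. -/
theorem cIMA_eq_gram (W : Matrix (Fin n) (Fin n) ℝ) :
    cIMA W = (∑ i, Real.log ((Wᵀ * W) i i) - Real.log (Wᵀ * W).det) / 2 := by
  have log_colNorm (i : Fin n) : Real.log (colNorm W i) = Real.log ((Wᵀ * W) i i) / 2 := by
    rw [colNorm_eq_sqrt_gram, Real.log_sqrt]
    exact (posSemidef_conjTranspose_mul_self W).diag_nonneg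
  have log_det : Real.log (Wᵀ * W).det = 2 * Real.log |W.det| := by
    rw [det_mul, det_transpose, ← sq, Real.log_pow, Real.log_abs, Nat.cast_ofNat]
  simp only [cIMA, log_colNorm, log_det, ← Finset.sum_div]
  ring

theorem cIMA_nonneg (hW : W.det ≠ 0) : 0 ≤ cIMA W := by
  rw [cIMA_eq_gram]
  linarith [log_det_le_sum_log_diag (posDef_gram hW)]

theorem cIMA_eq_zero_iff (hW : W.det ≠ 0) : cIMA W = 0 ↔ (Wᵀ * W).IsDiag := by
  rw [← log_det_eq_sum_log_diag_iff (posDef_gram hW), cIMA_eq_gram]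
  constructor <;> intro h <;> linarith

theorem cIMA_orthogonal_mul {O : Matrix (Fin n) (Fin n) ℝ} (hO : O ∈ orthogonalGroup (Fin n) ℝ)
    (W : Matrix (Fin n) (Fin n) ℝ) : cIMA (O * W) = cIMA W := by
  have hOO : Oᵀ * O = 1 := (mem_orthogonalGroup_iff' (Fin n) ℝ).1 hO
  have gram_eq : (O * W)ᵀ * (O * W) = Wᵀ * W := by
    rw [transpose_mul, Matrix.mul_assoc, ← Matrix.mul_assoc Oᵀ, hOO, Matrix.one_mul]
  rw [cIMA_eq_gram, gram_eq, ← cIMA_eq_gram]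

theorem colNorm_smul (c : ℝ) (W : Matrix (Fin n) (Fin n) ℝ) (i : Fin n) :
    colNorm (c • W) i = |c| * colNorm W i := by
  simp only [colNorm, Matrix.smul_apply, smul_eq_mul, mul_pow, ← Finset.mul_sum]
  rw [Real.sqrt_mul (sq_nonneg c), Real.sqrt_sq_eq_abs]

theorem cIMA_smul {c : ℝ} (hc : c ≠ 0) (hW : W.det ≠ 0) : cIMA (c • W) = cIMA W := by
  have log_colNorm (i : Fin n) :
      Real.log (colNorm (c • W) i) = Real.log |c| + Real.log (colNorm W i) := by
    rw [colNorm_smul, Real.log_mul (abs_ne_zero.2 hc) (colNorm_pos hW i).ne']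
  have log_det : Real.log |(c • W).det| = n * Real.log |c| + Real.log |W.det| := by
    rw [det_smul, abs_mul, abs_pow, Fintype.card_fin,
      Real.log_mul (pow_ne_zero n (abs_ne_zero.2 hc)) (abs_ne_zero.2 hW), Real.log_pow]
  simp only [cIMA, log_colNorm, log_det, Finset.sum_add_distrib, Finset.sum_const,
    Finset.card_univ, Fintype.card_fin, nsmul_eq_mul]
  ring

theorem continuous_cIMA {X : Type*} [TopologicalSpace X] {W : X → Matrix (Fin n) (Fin n) ℝ}
    (hW : Continuous W) (hdet : ∀ x, (W x).det ≠ 0) : Continuous fun x => cIMA (W x) := by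
  have continuous_colNorm (i : Fin n) : Continuous fun x => colNorm (W x) i :=
    (continuous_finsetSum _ fun j _ => (hW.matrix_elem j i).pow 2).sqrt
  exact (continuous_finsetSum _ fun i _ =>
    (continuous_colNorm i).log fun x => (colNorm_pos (hdet x) i).ne').sub
      (hW.matrix_det.abs.log fun x => abs_ne_zero.2 (hdet x))

end Contrast

section Jacobian

variable {n : ℕ} {f h : (Fin n → ℝ) → (Fin n → ℝ)} {z : Fin n → ℝ}

theorem jacobian_eq_toMatrix' (f : (Fin n → ℝ) → (Fin n → ℝ)) (z : Fin n → ℝ) :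
    jacobian f z = LinearMap.toMatrix' (fderiv ℝ f z : (Fin n → ℝ) →ₗ[ℝ] Fin n → ℝ) := by
  ext i j
  simp [jacobian, LinearMap.toMatrix'_apply]

theorem jacobian_comp (hf : DifferentiableAt ℝ f (h z)) (hh : DifferentiableAt ℝ h z) :
    jacobian (f ∘ h) z = jacobian f (h z) * jacobian h z := by
  simp only [jacobian_eq_toMatrix', fderiv_comp z hf hh]
  exact LinearMap.toMatrix'_comp _ _

theorem differentiable_mulVec (R : Matrix (Fin n) (Fin n) ℝ) : Differentiable ℝ R.mulVec :=
  (LinearMap.toContinuousLinearMap R.mulVecLin).differentiable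

theorem jacobian_mulVec (R : Matrix (Fin n) (Fin n) ℝ) (z : Fin n → ℝ) :
    jacobian R.mulVec z = R := by
  have : fderiv ℝ R.mulVec z = LinearMap.toContinuousLinearMap R.mulVecLin :=
    (LinearMap.toContinuousLinearMap R.mulVecLin).fderiv
  ext i j
  simp [jacobian, this]

variable {τ : Fin n → ℝ → ℝ}

theorem hasFDerivAt_piMap (hτ : ∀ k, DifferentiableAt ℝ (τ k) (z k)) :
    HasFDerivAt (Pi.map τ)
      (ContinuousLinearMap.pi fun k =>
        deriv (τ k) (z k) • ContinuousLinearMap.proj (R := ℝ) (φ := fun _ : Fin n => ℝ) k) z :=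
  hasFDerivAt_pi.2 fun k => (hτ k).hasDerivAt.comp_hasFDerivAt z (hasFDerivAt_apply k z)

theorem jacobian_piMap (hτ : ∀ k, DifferentiableAt ℝ (τ k) (z k)) :
    jacobian (Pi.map τ) z = diagonal fun k => deriv (τ k) (z k) := by
  ext i j
  simp [jacobian, (hasFDerivAt_piMap hτ).fderiv, diagonal_apply, Pi.single_apply]

theorem differentiable_piMap_comp_mulVec (hτ : ∀ k, Differentiable ℝ (τ k))
    (R : Matrix (Fin n) (Fin n) ℝ) : Differentiable ℝ (Pi.map τ ∘ R.mulVec) :=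
  Differentiable.comp (fun z => (hasFDerivAt_piMap fun k => hτ k (z k)).differentiableAt)
    (differentiable_mulVec R)

theorem jacobian_piMap_comp_mulVec (hτ : ∀ k, Differentiable ℝ (τ k))
    (R : Matrix (Fin n) (Fin n) ℝ) (z : Fin n → ℝ) :
    jacobian (Pi.map τ ∘ R.mulVec) z = diagonal (fun k => deriv (τ k) ((R *ᵥ z) k)) * R := by
  rw [jacobian_comp (hasFDerivAt_piMap fun k => (hτ k).differentiableAt).differentiableAt
    (differentiable_mulVec R z), jacobian_piMap fun k => (hτ k).differentiableAt, jacobian_mulVec]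

theorem cIMA_jacobian_conformal_comp (hf : DifferentiableAt ℝ f (h z))
    (hh : DifferentiableAt ℝ h z) {c : ℝ} (hc : c ≠ 0) {O : Matrix (Fin n) (Fin n) ℝ}
    (hO : O ∈ orthogonalGroup (Fin n) ℝ) (hconf : jacobian f (h z) = c • O)
    (hdet : (jacobian h z).det ≠ 0) :
    cIMA (jacobian (f ∘ h) z) = cIMA (jacobian h z) := by
  rw [jacobian_comp hf hh, hconf, Matrix.smul_mul, ← Matrix.mul_smul, cIMA_orthogonal_mul hO,
    cIMA_smul hc hdet]

end Jacobian

theorem deriv_ne_zero_of_leftInverse {𝕜 : Type*} [NontriviallyNormedField 𝕜]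
    {σ τ : 𝕜 → 𝕜} {y : 𝕜} (hσ : DifferentiableAt 𝕜 σ (τ y)) (hτ : DifferentiableAt 𝕜 τ y)
    (h : Function.LeftInverse σ τ) : deriv τ y ≠ 0 := by
  have chain : deriv σ (τ y) * deriv τ y = 1 := by
    rw [← deriv_comp y hσ hτ, h.comp_eq_id, deriv_id]
  exact right_ne_zero_of_mul_eq_one chain

theorem exists_cIMA_diagonal_mul_ne_zero {n : ℕ} {R : Matrix (Fin n) (Fin n) ℝ}
    (hR : R ∈ orthogonalGroup (Fin n) ℝ) {m i j : Fin n} (hij : i ≠ j) (hi : R m i ≠ 0)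
    (hj : R m j ≠ 0) {δ : Fin n → ℝ → ℝ} (hδ : ∀ k t, δ k t ≠ 0) (hcont : Continuous (δ m))
    (hm : ∃ s t, δ m s ≠ δ m t) :
    ∃ z, cIMA (diagonal (fun k => δ k ((R *ᵥ z) k)) * R) ≠ 0 := by
  obtain ⟨k, hkm, hk⟩ := exists_ne_apply_ne_zero_of_mem_orthogonalGroup hR hij hi hj
  by_contra! contrast_zero
  -- Varying `z` along `Rᵀ e_m` moves the argument of `δ m` and fixes that of `δ k`.
  have sq_eq (t : ℝ) : δ m t ^ 2 = δ k 0 ^ 2 := by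
    have hRR : R * Rᵀ = 1 := (mem_orthogonalGroup_iff (Fin n) ℝ).1 hR
    have hz : R *ᵥ (Rᵀ *ᵥ Pi.single m t) = Pi.single m t := by
      rw [mulVec_mulVec, hRR, one_mulVec]
    have columns_orthogonal := (cIMA_eq_zero_iff (det_diagonal_mul_ne_zero hR fun k => hδ k _)).1
      (contrast_zero (Rᵀ *ᵥ Pi.single m t))
    have := sq_eq_sq_of_isDiag_gram_diagonal_mul hR columns_orthogonal hi hk
    rwa [hz, Pi.single_eq_same, Pi.single_eq_of_ne hkm] at this
  obtain ⟨s, t, hst⟩ := hm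
  exact hst (isPreconnected_univ.eq_of_sq_eq hcont.continuousOn continuousOn_const
    (fun u _ => (sq_eq u).trans (sq_eq t).symm) (fun _ => hδ m t) (Set.mem_univ t) rfl
    (Set.mem_univ s))

theorem integral_mul_pos_of_continuous {X : Type*} [TopologicalSpace X] [MeasurableSpace X]
    {μ : Measure X} [μ.IsOpenPosMeasure] {c p : X → ℝ} (hc : Continuous c) (hc0 : ∀ x, 0 ≤ c x)
    (hne : ∃ x, c x ≠ 0) (hp : ∀ x, 0 < p x) (hint : Integrable (fun x => c x * p x) μ) :
    0 < ∫ x, c x * p x ∂μ := by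
  have support_eq : Function.support (fun x => c x * p x) = Function.support c := by
    ext x
    simp [(hp x).ne']
  rw [integral_pos_iff_support_of_nonneg (fun x => mul_nonneg (hc0 x) (hp x).le) hint, support_eq]
  exact hc.isOpen_support.measure_pos μ hne

theorem conformal_comp_MPA_has_positive_CIMA_general {n : ℕ}
    {f : (Fin n → ℝ) → (Fin n → ℝ)} (hf : Differentiable ℝ f)
    {lam : (Fin n → ℝ) → ℝ} (hlam : ∀ s, lam s ≠ 0)
    {O : (Fin n → ℝ) → Matrix (Fin n) (Fin n) ℝ} (hO : ∀ s, O s ∈ orthogonalGroup (Fin n) ℝ)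
    (hconf : ∀ s, jacobian f s = lam s • O s)
    {τ : Fin n → ℝ → ℝ} (hτ : ∀ k, ContDiff ℝ 1 (τ k)) (hτ' : ∀ k t, deriv (τ k) t ≠ 0)
    {R : Matrix (Fin n) (Fin n) ℝ} (hR : R ∈ orthogonalGroup (Fin n) ℝ)
    {m i j : Fin n} (hij : i ≠ j) (hi : R m i ≠ 0) (hj : R m j ≠ 0)
    (hm : ∃ s t, deriv (τ m) s ≠ deriv (τ m) t)
    {p : (Fin n → ℝ) → ℝ} (hp : ∀ z, 0 < p z)
    (hint : Integrable fun z => cIMA (jacobian (f ∘ Pi.map τ ∘ R.mulVec) z) * p z) :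
    0 < CIMA (f ∘ Pi.map τ ∘ R.mulVec) p := by
  have hτd (k : Fin n) : Differentiable ℝ (τ k) := (hτ k).differentiable one_ne_zero
  have hdet (z : Fin n → ℝ) : (diagonal (fun k => deriv (τ k) ((R *ᵥ z) k)) * R).det ≠ 0 :=
    det_diagonal_mul_ne_zero hR fun k => hτ' k _
  have contrast_eq (z : Fin n → ℝ) : cIMA (jacobian (f ∘ Pi.map τ ∘ R.mulVec) z) =
      cIMA (diagonal (fun k => deriv (τ k) ((R *ᵥ z) k)) * R) := by
    rw [← jacobian_piMap_comp_mulVec hτd]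
    exact cIMA_jacobian_conformal_comp (hf _) (differentiable_piMap_comp_mulVec hτd R z)
      (hlam _) (hO _) (hconf _) (jacobian_piMap_comp_mulVec hτd R z ▸ hdet z)
  simp only [contrast_eq, CIMA] at hint ⊢
  refine integral_mul_pos_of_continuous (continuous_cIMA ?_ hdet) (fun z => cIMA_nonneg (hdet z))
    (exists_cIMA_diagonal_mul_ne_zero hR hij hi hj hτ' ((hτ m).continuous_deriv le_rfl) hm) hp hint
  have continuous_deriv_mulVec (k : Fin n) : Continuous fun z => deriv (τ k) ((R *ᵥ z) k) :=
    ((hτ k).continuous_deriv le_rfl).comp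
      ((continuous_apply k).comp (differentiable_mulVec R).continuous)
  exact (continuous_pi continuous_deriv_mulVec).matrix_diagonal.matrix_mul continuous_const

/-- a conformal mixing composed with a "rotated-Gaussian"
measure-preserving automorphism has positive IMA contrast, reduced form:
for a smooth conformal map `f`, an element-wise smooth diffeomorphism `σ` with
strictly positive derivatives whose first component is not affine (the
derivative of `σ₁⁻¹` is strictly monotonic near some `z₁⁰`), and an orthogonal
`R` whose first row has two nonvanishing entries, the map `f ∘ σ⁻¹ ∘ R` has
strictly positive global IMA contrast w.r.t. any smooth positive density `p`. -/
theorem conformal_comp_MPA_has_positive_CIMA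
    {n : ℕ} [NeZero n]
    (f : (Fin n → ℝ) → (Fin n → ℝ)) (hf : ContDiff ℝ (⊤ : ℕ∞) f)
    (lam : (Fin n → ℝ) → ℝ) (hlam : ∀ s, 0 < lam s)
    (O : (Fin n → ℝ) → Matrix (Fin n) (Fin n) ℝ) (hO : ∀ s, (O s)ᵀ * O s = 1)
    (hconf : ∀ s, jacobian f s = lam s • O s)
    (σ σinv : Fin n → ℝ → ℝ)
    (hσsm : ∀ i, ContDiff ℝ (⊤ : ℕ∞) (σ i)) (hσinvsm : ∀ i, ContDiff ℝ (⊤ : ℕ∞) (σinv i))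
    (hli : ∀ i, Function.LeftInverse (σinv i) (σ i))
    (hri : ∀ i, Function.RightInverse (σinv i) (σ i))
    (hpos : ∀ i x, 0 < deriv (σ i) x)
    (z₁0 : ℝ) (U : Set ℝ) (hUopen : IsOpen U) (hz : z₁0 ∈ U)
    (hmono : StrictMonoOn (deriv (σinv 0)) U ∨ StrictAntiOn (deriv (σinv 0)) U)
    (R : Matrix (Fin n) (Fin n) ℝ) (hR : Rᵀ * R = 1)
    (i j : Fin n) (hij : i ≠ j) (hRi : R 0 i ≠ 0) (hRj : R 0 j ≠ 0)
    (p : (Fin n → ℝ) → ℝ) (hpsm : ContDiff ℝ (⊤ : ℕ∞) p) (hppos : ∀ z, 0 < p z)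
    (hp1 : (∫ z, p z) = 1)
    (g : (Fin n → ℝ) → (Fin n → ℝ))
    (hg : g = fun z => f fun k => σinv k (R.mulVec z k))
    (hint : Integrable fun z => cIMA (jacobian g z) * p z) :
    0 < CIMA g p := by
  subst hg
  obtain ⟨s, hs, t, ht, hst⟩ := (infinite_of_mem_nhds z₁0 (hUopen.mem_nhds hz)).nontrivial
  exact conformal_comp_MPA_has_positive_CIMA_general (hf.differentiable (by simp))
    (fun s => (hlam s).ne') (fun s => (mem_orthogonalGroup_iff' (Fin n) ℝ).2 (hO s)) hconf
    (fun k => (hσinvsm k).of_le (by simp))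
    (fun k y => deriv_ne_zero_of_leftInverse ((hσsm k).differentiable (by simp) _)
      ((hσinvsm k).differentiable (by simp) y) (hri k))
    ((mem_orthogonalGroup_iff' (Fin n) ℝ).2 hR) hij hRi hRj
    ⟨s, t, (hmono.elim StrictMonoOn.injOn StrictAntiOn.injOn).ne hs ht hst⟩ hppos hint
end
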